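/- Let M and N be weight sequences satisfying m_k^{1/k} → ∞ and n_k^{1/k} → ∞, where m_k := M_k/k! and n_k := N_k/k!, and suppose C := mg(M,N) < ∞. Let ε > 0, let g be holomorphic on Ω_ε and continuous on its closure, and assume there are constants L, a_1, a_2 > 0 such that sup_{z∈Ω_ε} |g(z)| ≤ L and sup_{x∈[-1,1]} |g(x)| ≤ a_1·h_m(a_2·ε). Then, with a_3 := max{a_1, L} and a_4 := e·C·a_2, one has sup_{z∈Ω_{ε/2}} |g(z)| ≤ a_3·h_n(a_4·ε). -/

import Mathlib

open Filter Set Asymptotics MeasureTheory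

noncomputable section

/-- `M` is a weight sequence: `M 0 = 1`, positive, `M 1 ≥ 1`, log-convex and
`M k ^ (1/k) → ∞`. -/
def IsWeightSeq (M : ℕ → ℝ) : Prop :=
  M 0 = 1 ∧ (∀ k, 0 < M k) ∧ 1 ≤ M 1 ∧
    (∀ k : ℕ, 1 ≤ k → M k ^ 2 ≤ M (k - 1) * M (k + 1)) ∧
    Tendsto (fun k : ℕ => M k ^ (1 / (k : ℝ))) atTop atTop

/-- The sequence `m k = M k / k!`. -/
def mseq (M : ℕ → ℝ) : ℕ → ℝ := fun k => M k / (Nat.factorial k : ℝ)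

/-- Log-convexity of a sequence. -/
def LogConvexSeq (m : ℕ → ℝ) : Prop := ∀ k : ℕ, 1 ≤ k → m k ^ 2 ≤ m (k - 1) * m (k + 1)

/-- `m k ^ (1/k) → ∞`. -/
def RootTendsToInfty (m : ℕ → ℝ) : Prop :=
  Tendsto (fun k : ℕ => m k ^ (1 / (k : ℝ))) atTop atTop

/-- Moderate growth of a sequence. -/
def ModerateGrowth (M : ℕ → ℝ) : Prop :=
  ∃ C : ℝ, 0 < C ∧ ∀ j k : ℕ, M (j + k) ≤ C ^ (j + k) * M j * M k

/-- Derivation closedness of a sequence. -/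
def DerivClosed (M : ℕ → ℝ) : Prop :=
  ∃ C : ℝ, 0 < C ∧ ∀ k : ℕ, M (k + 1) ≤ C ^ (k + 1) * M k

/-- Non-quasianalyticity: `∑_{k≥1} M (k-1) / M k = ∑_{k≥1} 1/μ_k < ∞`. -/
def NonQuasianalytic (M : ℕ → ℝ) : Prop := Summable fun k : ℕ => M k / M (k + 1)

/-- Quasianalyticity: `∑_{k≥1} 1/μ_k = ∞`. -/
def Quasianalytic (M : ℕ → ℝ) : Prop := ¬ NonQuasianalytic M

/-- The associated function `h_m (t) = inf_k m k * t ^ k`. -/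
def hFun (m : ℕ → ℝ) (t : ℝ) : ℝ := ⨅ k : ℕ, m k * t ^ k

/-- `Γ̄_m (t) = min {k | h_m t = m k * t ^ k}`. -/
def GammaBar (m : ℕ → ℝ) (t : ℝ) : ℕ := sInf {k : ℕ | hFun m t = m k * t ^ k}

/-- `Γ̲_m (t) = min {k | m (k+1) / m k ≥ 1 / t}`. -/
def GammaLow (m : ℕ → ℝ) (t : ℝ) : ℕ := sInf {k : ℕ | 1 / t ≤ m (k + 1) / m k}

/-- The set whose supremum is `mg (M, N)`. -/
def mgSet (M N : ℕ → ℝ) : Set ℝ :=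
  {x | ∃ j k : ℕ, 1 ≤ j + k ∧ x = (M (j + k) / (N j * N k)) ^ (1 / (j + k : ℝ))}

/-- `mg (M, N) = sup_{j+k ≥ 1} (M (j+k) / (N j * N k)) ^ (1/(j+k))`. -/
def mg (M N : ℕ → ℝ) : ℝ := sSup (mgSet M N)

/-- `mg (M, N) < ∞`. -/
def MgFinite (M N : ℕ → ℝ) : Prop := BddAbove (mgSet M N)

/-- A weight sequence is regular: `m k ^ (1/k) → ∞`, derivation closed, and
`Γ̄_m (C t) ≤ Γ̲_m t` for some `C ≥ 1`. -/
def RegularWS (M : ℕ → ℝ) : Prop :=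
  RootTendsToInfty (mseq M) ∧ DerivClosed M ∧
    ∃ C : ℝ, 1 ≤ C ∧ ∀ t : ℝ, 0 < t → GammaBar (mseq M) (C * t) ≤ GammaLow (mseq M) t

/-- `f` is of class `E^{M}` (Roumieu) on the open set `U`. -/
def RoumieuOn {E : Type*} [NormedAddCommGroup E] [NormedSpace ℝ E]
    (M : ℕ → ℝ) (f : E → ℂ) (U : Set E) : Prop :=
  ContDiffOn ℝ (⊤ : ℕ∞) f U ∧
    ∀ V : Set E, IsOpen V → IsCompact (closure V) → closure V ⊆ U →
      ∃ C σ : ℝ, 0 < C ∧ 0 < σ ∧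
        ∀ x ∈ V, ∀ k : ℕ, ‖iteratedFDerivWithin ℝ k f U x‖ ≤ C * σ ^ k * M k

/-- `f` is of class `E^{(M)}` (Beurling) on the open set `U`. -/
def BeurlingOn {E : Type*} [NormedAddCommGroup E] [NormedSpace ℝ E]
    (M : ℕ → ℝ) (f : E → ℂ) (U : Set E) : Prop :=
  ContDiffOn ℝ (⊤ : ℕ∞) f U ∧
    ∀ V : Set E, IsOpen V → IsCompact (closure V) → closure V ⊆ U →
      ∀ σ : ℝ, 0 < σ → ∃ C : ℝ, 0 < C ∧
        ∀ x ∈ V, ∀ k : ℕ, ‖iteratedFDerivWithin ℝ k f U x‖ ≤ C * σ ^ k * M k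

/-- A weight matrix: a nonempty, pointwise totally ordered family of weight sequences. -/
def IsWeightMatrix (W : Set (ℕ → ℝ)) : Prop :=
  W.Nonempty ∧ (∀ M ∈ W, IsWeightSeq M) ∧
    ∀ M ∈ W, ∀ N ∈ W, (∀ k, M k ≤ N k) ∨ (∀ k, N k ≤ M k)

/-- R-regularity of a weight matrix. -/
def RRegular (W : Set (ℕ → ℝ)) : Prop :=
  (∀ M ∈ W, RootTendsToInfty (mseq M)) ∧
    (∀ M ∈ W, ∃ N ∈ W, ∃ C : ℝ, 1 ≤ C ∧ ∀ j : ℕ, M (j + 1) ≤ C ^ (j + 1) * N j) ∧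
    (∀ M ∈ W, ∃ N ∈ W, ∃ C : ℝ, 1 ≤ C ∧
      ∀ t : ℝ, 0 < t → GammaBar (mseq N) (C * t) ≤ GammaLow (mseq M) t)

/-- B-regularity of a weight matrix. -/
def BRegular (W : Set (ℕ → ℝ)) : Prop :=
  (∀ M ∈ W, RootTendsToInfty (mseq M)) ∧
    (∀ M ∈ W, ∃ N ∈ W, ∃ C : ℝ, 1 ≤ C ∧ ∀ j : ℕ, N (j + 1) ≤ C ^ j * M j) ∧
    (∀ M ∈ W, ∃ N ∈ W, ∃ C : ℝ, 1 ≤ C ∧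
      ∀ t : ℝ, 0 < t → GammaBar (mseq M) (C * t) ≤ GammaLow (mseq N) t)

/-- R-moderate growth of a weight matrix. -/
def RModerateGrowth (W : Set (ℕ → ℝ)) : Prop := ∀ M ∈ W, ∃ N ∈ W, MgFinite M N

/-- B-moderate growth of a weight matrix. -/
def BModerateGrowth (W : Set (ℕ → ℝ)) : Prop := ∀ M ∈ W, ∃ N ∈ W, MgFinite N M

/-- `f` is of class `E^{W}` (Roumieu, weight matrix) on the open set `U`. -/
def MatrixRoumieuOn {E : Type*} [NormedAddCommGroup E] [NormedSpace ℝ E]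
    (W : Set (ℕ → ℝ)) (f : E → ℂ) (U : Set E) : Prop :=
  ContDiffOn ℝ (⊤ : ℕ∞) f U ∧
    ∀ V : Set E, IsOpen V → IsCompact (closure V) → closure V ⊆ U →
      ∃ M ∈ W, ∃ C σ : ℝ, 0 < C ∧ 0 < σ ∧
        ∀ x ∈ V, ∀ k : ℕ, ‖iteratedFDerivWithin ℝ k f U x‖ ≤ C * σ ^ k * M k

/-- `f` is of class `E^{(W)}` (Beurling, weight matrix) on the open set `U`. -/
def MatrixBeurlingOn {E : Type*} [NormedAddCommGroup E] [NormedSpace ℝ E]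
    (W : Set (ℕ → ℝ)) (f : E → ℂ) (U : Set E) : Prop :=
  ContDiffOn ℝ (⊤ : ℕ∞) f U ∧
    ∀ V : Set E, IsOpen V → IsCompact (closure V) → closure V ⊆ U →
      ∀ M ∈ W, ∀ σ : ℝ, 0 < σ → ∃ C : ℝ, 0 < C ∧
        ∀ x ∈ V, ∀ k : ℕ, ‖iteratedFDerivWithin ℝ k f U x‖ ≤ C * σ ^ k * M k

/-- `ω` is a weight function. -/
def IsWeightFunction (ω : ℝ → ℝ) : Prop :=
  ContinuousOn ω (Ici 0) ∧ MonotoneOn ω (Ici 0) ∧ (∀ t ∈ Ici (0 : ℝ), 0 ≤ ω t) ∧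
    ((fun t => ω (2 * t)) =O[atTop] ω) ∧ (ω =o[atTop] fun t : ℝ => t) ∧
    ((fun t => Real.log t) =o[atTop] ω) ∧ ConvexOn ℝ (Ici 0) fun t => ω (Real.exp t)

/-- The Young conjugate `φ*_ω (s) = sup_{t ≥ 0} (s t - ω (e^t))`. -/
def phiStar (ω : ℝ → ℝ) (s : ℝ) : ℝ := sSup ((fun t => s * t - ω (Real.exp t)) '' Ici 0)

/-- Non-quasianalyticity of a weight function. -/
def NonQuasianalyticW (ω : ℝ → ℝ) : Prop := IntegrableOn (fun t => ω t / t ^ 2) (Ici 1)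

/-- `f` is of class `E^{ω}` (Roumieu) on the open set `U`. -/
def OmegaRoumieuOn {E : Type*} [NormedAddCommGroup E] [NormedSpace ℝ E]
    (ω : ℝ → ℝ) (f : E → ℂ) (U : Set E) : Prop :=
  ContDiffOn ℝ (⊤ : ℕ∞) f U ∧
    ∀ V : Set E, IsOpen V → IsCompact (closure V) → closure V ⊆ U →
      ∃ C ρ : ℝ, 0 < C ∧ 0 < ρ ∧
        ∀ x ∈ V, ∀ k : ℕ,
          ‖iteratedFDerivWithin ℝ k f U x‖ ≤ C * Real.exp (phiStar ω (ρ * k) / ρ)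

/-- `f` is of class `E^{(ω)}` (Beurling) on the open set `U`. -/
def OmegaBeurlingOn {E : Type*} [NormedAddCommGroup E] [NormedSpace ℝ E]
    (ω : ℝ → ℝ) (f : E → ℂ) (U : Set E) : Prop :=
  ContDiffOn ℝ (⊤ : ℕ∞) f U ∧
    ∀ V : Set E, IsOpen V → IsCompact (closure V) → closure V ⊆ U →
      ∀ ρ : ℝ, 0 < ρ → ∃ C : ℝ, 0 < C ∧
        ∀ x ∈ V, ∀ k : ℕ,
          ‖iteratedFDerivWithin ℝ k f U x‖ ≤ C * Real.exp (phiStar ω (ρ * k) / ρ)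

/-- The open ellipse `Ω_ε` with vertices `± cosh ε` and co-vertices `± i sinh ε`. -/
def OmegaE (ε : ℝ) : Set ℂ :=
  {z : ℂ | (z.re / Real.cosh ε) ^ 2 + (z.im / Real.sinh ε) ^ 2 < 1}

/-- The sequence space `Λ^{M}`. -/
def Lambda (M : ℕ → ℝ) : Set (ℕ → ℂ) :=
  {c | ∃ ρ : ℝ, 0 < ρ ∧ ∃ C : ℝ, ∀ k, ‖c k‖ ≤ C * ρ ^ k * M k}

/-- `L(M)`: all non-quasianalytic weight sequences `N ≥ M` with `n = N/k!` log-convex. -/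
def LM (M : ℕ → ℝ) : Set (ℕ → ℝ) :=
  {N | IsWeightSeq N ∧ NonQuasianalytic N ∧ (∀ k, M k ≤ N k) ∧ LogConvexSeq (mseq N)}

/-- A quasianalytic weight sequence `M` is intersectable if `Λ^{M} = ⋂_{N ∈ L(M)} Λ^{N}`. -/
def Intersectable (M : ℕ → ℝ) : Prop := Lambda M = ⋂ N ∈ LM M, Lambda N

/-!
The map `cosh` carries the vertical strip `|Re w| < ε` onto the ellipse `Ω_ε`, and the imaginary
axis onto the focal segment `[-1, 1]`. Hadamard's three lines theorem for `g ∘ cosh` therefore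
bounds `g` on `Ω_{ε/2}` by the geometric mean of its bounds on `[-1, 1]` and on `Ω_ε`. This puts
a square root on `h_m`, which moderate growth absorbs: `M_{2k} ≤ C^{2k} N_k²` together with
`(k!)² ≤ (2k)!` gives `h_m(t) ≤ h_n(C t)²`.

To estimate `g` at `cosh w₀ ∈ Ω_{θε}`, the three lines theorem is applied on
`0 ≤ Re w ≤ Re w₀ / θ`: this closed strip is mapped into the open ellipse `Ω_ε`, and on it `w₀`
gets the exponent `θ` exactly.
-/

lemma le_rpow_mul_rpow {x A B θ : ℝ} (hx : 0 ≤ x) (hxA : x ≤ A) (hxB : x ≤ B)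
    (hθ₀ : 0 ≤ θ) (hθ₁ : θ ≤ 1) : x ≤ A ^ (1 - θ) * B ^ θ := by
  have hθ : 0 ≤ 1 - θ := sub_nonneg.2 hθ₁
  calc x = x ^ (1 - θ) * x ^ θ := by
        rw [← Real.rpow_add_of_nonneg hx hθ hθ₀, sub_add_cancel, Real.rpow_one]
    _ ≤ A ^ (1 - θ) * B ^ θ :=
        mul_le_mul (Real.rpow_le_rpow hx hxA hθ) (Real.rpow_le_rpow hx hxB hθ₀)
          (Real.rpow_nonneg hx _) (Real.rpow_nonneg (hx.trans hxA) _)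

section Ellipse

lemma re_cosh (w : ℂ) : (Complex.cosh w).re = Real.cosh w.re * Real.cos w.im := by
  conv_lhs => rw [← Complex.re_add_im w, Complex.cosh_add, Complex.cosh_mul_I, Complex.sinh_mul_I]
  simp [← Complex.ofReal_cosh, ← Complex.ofReal_sinh, ← Complex.ofReal_cos, ← Complex.ofReal_sin]

lemma im_cosh (w : ℂ) : (Complex.cosh w).im = Real.sinh w.re * Real.sin w.im := by
  conv_lhs => rw [← Complex.re_add_im w, Complex.cosh_add, Complex.cosh_mul_I, Complex.sinh_mul_I]
  simp [← Complex.ofReal_cosh, ← Complex.ofReal_sinh, ← Complex.ofReal_cos, ← Complex.ofReal_sin]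

lemma exists_re_nonneg_cosh_eq (z : ℂ) : ∃ w : ℂ, 0 ≤ w.re ∧ Complex.cosh w = z := by
  obtain ⟨v, rfl⟩ := Complex.cos_surjective z
  rcases le_total 0 (v * Complex.I).re with hv | hv
  · exact ⟨v * Complex.I, hv, Complex.cosh_mul_I v⟩
  · exact ⟨-(v * Complex.I), by simpa using hv, by rw [Complex.cosh_neg, Complex.cosh_mul_I]⟩

lemma exists_mem_Icc_cosh_eq_ofReal {w : ℂ} (hw : w.re = 0) :
    ∃ x ∈ Icc (-1 : ℝ) 1, Complex.cosh w = x :=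
  ⟨Real.cos w.im, Real.cos_mem_Icc w.im,
    Complex.ext (by rw [re_cosh, hw, Real.cosh_zero, one_mul, Complex.ofReal_re])
      (by rw [im_cosh, hw, Real.sinh_zero, zero_mul, Complex.ofReal_im])⟩

lemma cosh_mem_OmegaE_iff {ε : ℝ} (hε : 0 < ε) {w : ℂ} :
    Complex.cosh w ∈ OmegaE ε ↔ |w.re| < ε := by
  have hsinh : 0 < Real.sinh ε := Real.sinh_pos_iff.2 hε
  set q := (Real.cos w.im / Real.cosh ε) ^ 2 + (Real.sin w.im / Real.sinh ε) ^ 2 with hq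
  have hq_pos : 0 < q := by
    rcases eq_or_ne (Real.sin w.im) 0 with hsin | hsin
    · have hcos : Real.cos w.im ≠ 0 := fun hcos => by
        simpa [hsin, hcos] using Real.sin_sq_add_cos_sq w.im
      positivity
    · positivity
  have hdefect : 1 - (((Complex.cosh w).re / Real.cosh ε) ^ 2 +
      ((Complex.cosh w).im / Real.sinh ε) ^ 2) = (Real.sinh ε ^ 2 - Real.sinh w.re ^ 2) * q := by
    have hcosh : Real.cosh ε ≠ 0 := (Real.cosh_pos ε).ne'
    rw [re_cosh, im_cosh, hq]
    field_simp
    rw [Real.cosh_sq w.re, Real.cosh_sq ε, Real.cos_sq']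
    ring
  calc Complex.cosh w ∈ OmegaE ε
      ↔ 0 < (Real.sinh ε ^ 2 - Real.sinh w.re ^ 2) * q := by rw [← hdefect, sub_pos]; rfl
    _ ↔ |Real.sinh w.re| < Real.sinh ε := by
        rw [mul_pos_iff_of_pos_right hq_pos, sub_pos, sq_lt_sq, abs_of_pos hsinh]
    _ ↔ |w.re| < ε := by rw [Real.abs_sinh, Real.sinh_lt_sinh]

variable {E : Type*} [NormedAddCommGroup E] [NormedSpace ℂ E] {g : ℂ → E} {ε A B : ℝ}

open Complex.HadamardThreeLines in
lemma norm_cosh_le_rpow_mul_rpow (hg : DifferentiableOn ℂ g (OmegaE ε))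
    (hA : ∀ x ∈ Icc (-1 : ℝ) 1, ‖g x‖ ≤ A) (hB : ∀ z ∈ OmegaE ε, ‖g z‖ ≤ B)
    {r : ℝ} (hr : 0 < r) (hrε : r < ε) {w : ℂ} (hw : w.re ∈ Icc 0 r) :
    ‖g (Complex.cosh w)‖ ≤ A ^ (1 - w.re / r) * B ^ (w.re / r) := by
  have hmaps : MapsTo Complex.cosh (verticalClosedStrip 0 r) (OmegaE ε) := fun v hv =>
    (cosh_mem_OmegaE_iff (hr.trans hrε)).2 ((abs_of_nonneg hv.1).trans_lt (hv.2.trans_lt hrε))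
  have hclosure : closure (verticalStrip 0 r) ⊆ verticalClosedStrip 0 r :=
    closure_minimal (preimage_mono Ioo_subset_Icc_self)
      (isClosed_Icc.preimage Complex.continuous_re)
  have hdiff : DiffContOnCl ℂ (g ∘ Complex.cosh) (verticalStrip 0 r) :=
    ((hg.comp Complex.differentiable_cosh.differentiableOn hmaps).mono hclosure).diffContOnCl
  have hbdd : BddAbove ((norm ∘ g ∘ Complex.cosh) '' verticalClosedStrip 0 r) :=
    ⟨B, forall_mem_image.2 fun v hv => hB _ (hmaps hv)⟩
  have hleft : ∀ v ∈ Complex.re ⁻¹' {0}, ‖(g ∘ Complex.cosh) v‖ ≤ A := fun v hv => by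
    obtain ⟨x, hx, hvx⟩ := exists_mem_Icc_cosh_eq_ofReal hv
    simpa only [Function.comp_apply, hvx] using hA x hx
  have hright : ∀ v ∈ Complex.re ⁻¹' {r}, ‖(g ∘ Complex.cosh) v‖ ≤ B := fun v hv =>
    hB _ (hmaps ⟨hr.le.trans_eq hv.symm, hv.le⟩)
  simpa only [sub_zero, Function.comp_apply] using
    norm_le_interp_of_mem_verticalClosedStrip' hr hw hdiff hbdd hleft hright

theorem norm_le_rpow_mul_rpow_of_mem_OmegaE (hε : 0 < ε) (hg : DifferentiableOn ℂ g (OmegaE ε))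
    (hA : ∀ x ∈ Icc (-1 : ℝ) 1, ‖g x‖ ≤ A) (hB : ∀ z ∈ OmegaE ε, ‖g z‖ ≤ B)
    {θ : ℝ} (hθ₀ : 0 < θ) (hθ₁ : θ ≤ 1) {z : ℂ} (hz : z ∈ OmegaE (θ * ε)) :
    ‖g z‖ ≤ A ^ (1 - θ) * B ^ θ := by
  obtain ⟨w, hw, rfl⟩ := exists_re_nonneg_cosh_eq z
  have hwθ : w.re < θ * ε := by
    simpa only [abs_of_nonneg hw] using (cosh_mem_OmegaE_iff (mul_pos hθ₀ hε)).1 hz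
  rcases hw.eq_or_lt with hw₀ | hw₀
  · obtain ⟨x, hx, hwx⟩ := exists_mem_Icc_cosh_eq_ofReal hw₀.symm
    have hmem : Complex.cosh w ∈ OmegaE ε :=
      (cosh_mem_OmegaE_iff hε).2 (by rwa [← hw₀, abs_zero])
    exact le_rpow_mul_rpow (norm_nonneg _) (hwx ▸ hA x hx) (hB _ hmem) hθ₀.le hθ₁
  · have hr : w.re / θ < ε := (div_lt_iff₀' hθ₀).2 hwθ
    simpa only [div_div_cancel₀ hw₀.ne'] using
      norm_cosh_le_rpow_mul_rpow hg hA hB (div_pos hw₀ hθ₀) hr ⟨hw, le_div_self hw hθ₀ hθ₁⟩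

end Ellipse

section AssociatedFunction

variable {m : ℕ → ℝ}

lemma hFun_le (hm : ∀ k, 0 ≤ m k) {t : ℝ} (ht : 0 ≤ t) (k : ℕ) : hFun m t ≤ m k * t ^ k :=
  ciInf_le ⟨0, forall_mem_range.2 fun j => mul_nonneg (hm j) (pow_nonneg ht j)⟩ k

lemma hFun_nonneg (hm : ∀ k, 0 ≤ m k) {t : ℝ} (ht : 0 ≤ t) : 0 ≤ hFun m t :=
  Real.iInf_nonneg fun k => mul_nonneg (hm k) (pow_nonneg ht k)

lemma monotoneOn_hFun (hm : ∀ k, 0 ≤ m k) : MonotoneOn (hFun m) (Ici 0) :=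
  fun _ hs _ _ hst => le_ciInf fun k => (hFun_le hm hs k).trans <|
    mul_le_mul_of_nonneg_left (pow_le_pow_left₀ hs hst k) (hm k)

lemma hFun_le_hFun_mul (hm : ∀ k, 0 ≤ m k) {t c : ℝ} (ht : 0 ≤ t) (hc : 1 ≤ c) :
    hFun m t ≤ hFun m (c * t) :=
  have htc : t ≤ c * t := le_mul_of_one_le_left ht hc
  monotoneOn_hFun hm ht (ht.trans htc) htc

end AssociatedFunction

section MixedModerateGrowth

variable {M N : ℕ → ℝ}

lemma mseq_nonneg (hM : ∀ k, 0 ≤ M k) (k : ℕ) : 0 ≤ mseq M k :=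
  div_nonneg (hM k) (Nat.cast_nonneg _)

lemma mg_nonneg (hM : ∀ k, 0 ≤ M k) (hN : ∀ k, 0 ≤ N k) : 0 ≤ mg M N := by
  refine Real.sSup_nonneg ?_
  rintro _ ⟨j, k, -, rfl⟩
  exact Real.rpow_nonneg (div_nonneg (hM _) (mul_nonneg (hN _) (hN _))) _

lemma le_mg_pow_mul (hM : ∀ k, 0 ≤ M k) (hN : ∀ k, 0 < N k) (h₀ : M 0 ≤ N 0 * N 0)
    (hfin : MgFinite M N) (j k : ℕ) : M (j + k) ≤ mg M N ^ (j + k) * (N j * N k) := by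
  have hNjk : 0 < N j * N k := mul_pos (hN j) (hN k)
  rcases Nat.eq_zero_or_pos (j + k) with hjk | hjk
  · obtain ⟨rfl, rfl⟩ := Nat.add_eq_zero_iff.1 hjk
    simpa using h₀
  have hroot : (M (j + k) / (N j * N k)) ^ ((j + k : ℕ) : ℝ)⁻¹ ≤ mg M N :=
    le_csSup hfin ⟨j, k, hjk, by rw [one_div, Nat.cast_add]⟩
  have hquot : 0 ≤ M (j + k) / (N j * N k) := div_nonneg (hM _) hNjk.le
  rw [← div_le_iff₀ hNjk, ← Real.rpow_inv_natCast_pow hquot hjk.ne']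
  exact pow_le_pow_left₀ (Real.rpow_nonneg hquot _) hroot _

lemma mseq_add_le (hM : ∀ k, 0 ≤ M k) (hN : ∀ k, 0 < N k) (h₀ : M 0 ≤ N 0 * N 0)
    (hfin : MgFinite M N) (j k : ℕ) :
    mseq M (j + k) ≤ mg M N ^ (j + k) * (mseq N j * mseq N k) := by
  have hfact : (j.factorial * k.factorial : ℝ) ≤ (j + k).factorial :=
    mod_cast Nat.le_of_dvd (Nat.factorial_pos _) (Nat.factorial_mul_factorial_dvd_factorial_add j k)
  have hC : 0 ≤ mg M N := mg_nonneg hM fun k => (hN k).le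
  calc M (j + k) / (j + k).factorial
      ≤ mg M N ^ (j + k) * (N j * N k) / (j.factorial * k.factorial) :=
        div_le_div₀ (mul_nonneg (pow_nonneg hC _) (mul_pos (hN j) (hN k)).le)
          (le_mg_pow_mul hM hN h₀ hfin j k) (by positivity) hfact
    _ = mg M N ^ (j + k) * (mseq N j * mseq N k) := by
        rw [mul_div_assoc, mul_div_mul_comm]; rfl

lemma sqrt_hFun_mseq_le (hM : ∀ k, 0 ≤ M k) (hN : ∀ k, 0 < N k) (h₀ : M 0 ≤ N 0 * N 0)
    (hfin : MgFinite M N) {t : ℝ} (ht : 0 ≤ t) :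
    √(hFun (mseq M) t) ≤ hFun (mseq N) (mg M N * t) := by
  have hC : 0 ≤ mg M N := mg_nonneg hM fun k => (hN k).le
  refine le_ciInf fun k => Real.sqrt_le_iff.2 ⟨?_, ?_⟩
  · exact mul_nonneg (mseq_nonneg (fun k => (hN k).le) k) (pow_nonneg (mul_nonneg hC ht) k)
  · calc hFun (mseq M) t ≤ mseq M (k + k) * t ^ (k + k) := hFun_le (mseq_nonneg hM) ht _
      _ ≤ mg M N ^ (k + k) * (mseq N k * mseq N k) * t ^ (k + k) := by
        gcongr
        exact mseq_add_le hM hN h₀ hfin k k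
      _ = (mseq N k * (mg M N * t) ^ k) ^ 2 := by ring

end MixedModerateGrowth

theorem statement12_general {E : Type*} [NormedAddCommGroup E] [NormedSpace ℂ E] {M N : ℕ → ℝ}
    (hM : ∀ k, 0 ≤ M k) (hN : ∀ k, 0 < N k) (h₀ : M 0 ≤ N 0 * N 0) (hfin : MgFinite M N)
    {ε : ℝ} (hε : 0 < ε) {g : ℂ → E} (hg : DifferentiableOn ℂ g (OmegaE ε))
    {L a₁ a₂ : ℝ} (ha₂ : 0 ≤ a₂) (hbound : ∀ z ∈ OmegaE ε, ‖g z‖ ≤ L)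
    (hsmall : ∀ x ∈ Icc (-1 : ℝ) 1, ‖g x‖ ≤ a₁ * hFun (mseq M) (a₂ * ε)) :
    ∀ z ∈ OmegaE (ε / 2), ‖g z‖ ≤ max a₁ L * hFun (mseq N) (mg M N * (a₂ * ε)) := by
  intro z hz
  set K := max a₁ L
  set h := hFun (mseq M) (a₂ * ε)
  have ht : 0 ≤ a₂ * ε := mul_nonneg ha₂ hε.le
  have h_nonneg : 0 ≤ h := hFun_nonneg (mseq_nonneg hM) ht
  have hK : 0 ≤ K :=
    (norm_nonneg _).trans ((hbound 0 (by simp [OmegaE])).trans (le_max_right _ _))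
  have hA : ∀ x ∈ Icc (-1 : ℝ) 1, ‖g x‖ ≤ K * h := fun x hx =>
    (hsmall x hx).trans (mul_le_mul_of_nonneg_right (le_max_left _ _) h_nonneg)
  have hB : ∀ z ∈ OmegaE ε, ‖g z‖ ≤ K := fun z hz => (hbound z hz).trans (le_max_right _ _)
  rw [div_eq_inv_mul, ← one_div] at hz
  calc ‖g z‖ ≤ (K * h) ^ (1 - 1 / 2 : ℝ) * K ^ (1 / 2 : ℝ) :=
        norm_le_rpow_mul_rpow_of_mem_OmegaE hε hg hA hB one_half_pos one_half_lt_one.le hz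
    _ = K * √h := by
        rw [sub_half, ← Real.sqrt_eq_rpow, ← Real.sqrt_eq_rpow, Real.sqrt_mul hK,
          mul_right_comm, Real.mul_self_sqrt hK]
    _ ≤ K * hFun (mseq N) (mg M N * (a₂ * ε)) :=
        mul_le_mul_of_nonneg_left (sqrt_hFun_mseq_le hM hN h₀ hfin ht) hK

/-- a Hadamard-three-lines estimate on the ellipses `Ω_ε`: if `g` is
holomorphic on `Ω_ε`, continuous on its closure, bounded by `L` on `Ω_ε` and by
`a₁ h_m (a₂ ε)` on `[-1,1]`, then `g` is bounded by `max a₁ L * h_n (e C a₂ ε)` on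
`Ω_{ε/2}`, where `C = mg (M, N)`. -/
theorem statement12 (M N : ℕ → ℝ) (hM : IsWeightSeq M) (hN : IsWeightSeq N)
    (hm : RootTendsToInfty (mseq M)) (hn : RootTendsToInfty (mseq N))
    (hfin : MgFinite M N) (ε : ℝ) (hε : 0 < ε)
    (g : ℂ → ℂ) (hgd : DifferentiableOn ℂ g (OmegaE ε))
    (hgc : ContinuousOn g (closure (OmegaE ε)))
    (L a₁ a₂ : ℝ) (hL : 0 < L) (ha₁ : 0 < a₁) (ha₂ : 0 < a₂)
    (hbound : ∀ z ∈ OmegaE ε, ‖g z‖ ≤ L)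
    (hsmall : ∀ x ∈ Icc (-1 : ℝ) 1, ‖g (x : ℂ)‖ ≤ a₁ * hFun (mseq M) (a₂ * ε)) :
    ∀ z ∈ OmegaE (ε / 2),
      ‖g z‖ ≤ max a₁ L * hFun (mseq N) (Real.exp 1 * mg M N * a₂ * ε) := by
  intro z hz
  have hM₀ : ∀ k, 0 ≤ M k := fun k => (hM.2.1 k).le
  have hN₀ : ∀ k, 0 ≤ N k := fun k => (hN.2.1 k).le
  have ht : 0 ≤ mg M N * (a₂ * ε) := mul_nonneg (mg_nonneg hM₀ hN₀) (mul_pos ha₂ hε).le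
  calc ‖g z‖ ≤ max a₁ L * hFun (mseq N) (mg M N * (a₂ * ε)) :=
        statement12_general hM₀ hN.2.1 (by simp [hM.1, hN.1]) hfin hε hgd ha₂.le hbound hsmall z hz
    _ ≤ max a₁ L * hFun (mseq N) (Real.exp 1 * (mg M N * (a₂ * ε))) :=
        mul_le_mul_of_nonneg_left
          (hFun_le_hFun_mul (mseq_nonneg hN₀) ht (Real.one_le_exp zero_le_one))
          (hL.le.trans (le_max_right _ _))
    _ = max a₁ L * hFun (mseq N) (Real.exp 1 * mg M N * a₂ * ε) := by simp only [mul_assoc]
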